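/- Let ζ = e^{2πi/3}. For every complex number q with |q| < 1, one has 1/((ζ q^2; q^2)_∞ (q; q^2)_∞ (ζ^{-1} q^2; q^2)_∞ (q^3; q^6)_∞) = ( (−q^3; q^3)_∞ / (q^6; q^6)_∞ ) · ∑_{n=0}^∞ q^{n(n+1)/2}. -/

import Mathlib

/-- The q-shifted factorial `(a; q)_∞ = ∏_{n=0}^∞ (1 - a qⁿ)`. -/
noncomputable def qPoch (a q : ℂ) : ℂ := ∏' n : ℕ, (1 - a * q ^ n)

/-- `ζ = e^{2πi/3}`, a primitive cube root of unity. -/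
noncomputable def ζ : ℂ := Complex.exp (2 * Real.pi * Complex.I / 3)

/-!
The product over the cube roots of unity collapses the two `ζ`-factors, since
`(1 - ζx)(1 - ζ⁻¹x)(1 - x) = 1 - x³`, and Euler's identity `(-q; q)_∞ (q; q²)_∞ = 1` turns
`(q³; q⁶)_∞` into `(-q³; q³)_∞`. What remains is Gauss's evaluation
`∑ q^{n(n+1)/2} = (q²; q²)_∞ / (q; q²)_∞`. It follows from Shanks's finite form: with
`Pₙ = ∏_{j<n} (1 - q^{2j+2}) / (1 - q^{2j+1})`,
`∑_{s ≤ 2n} q^{s(s+1)/2} = ∑_{s ≤ n} (Pₙ / Pₛ) q^{s(2n+1)}`,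
where only the term `s = 0` of the right-hand side survives as `n → ∞`.
-/

open Finset Filter Topology

lemma norm_pow_lt_one {𝕜 : Type*} [NormedDivisionRing 𝕜] {q : 𝕜} (hq : ‖q‖ < 1) {n : ℕ}
    (hn : n ≠ 0) : ‖q ^ n‖ < 1 := by
  simpa only [norm_pow] using pow_lt_one₀ (norm_nonneg q) hq hn

lemma pow_ne_one_of_norm_lt_one {𝕜 : Type*} [NormedDivisionRing 𝕜] {q : 𝕜} (hq : ‖q‖ < 1)
    {n : ℕ} (hn : n ≠ 0) : q ^ n ≠ 1 :=
  ne_of_apply_ne norm (by simpa only [norm_one] using (norm_pow_lt_one hq hn).ne)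

section QPochhammer

variable {a q : ℂ}

lemma summable_norm_neg_mul_pow (hq : ‖q‖ < 1) (a : ℂ) :
    Summable fun n : ℕ ↦ ‖-(a * q ^ n)‖ := by
  simpa only [norm_neg, norm_mul, norm_pow] using
    (summable_geometric_of_lt_one (norm_nonneg q) hq).mul_left ‖a‖

lemma multipliable_one_sub_mul_pow (hq : ‖q‖ < 1) (a : ℂ) :
    Multipliable fun n : ℕ ↦ 1 - a * q ^ n := by
  simpa only [sub_eq_add_neg] using
    multipliable_one_add_of_summable (summable_norm_neg_mul_pow hq a)

lemma qPoch_ne_zero (hq : ‖q‖ < 1) (ha : ∀ n : ℕ, a * q ^ n ≠ 1) : qPoch a q ≠ 0 := by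
  simpa only [qPoch, sub_eq_add_neg] using
    tprod_one_add_ne_zero_of_summable (f := fun n : ℕ ↦ -(a * q ^ n))
      (fun n ↦ by simpa only [← sub_eq_add_neg] using sub_ne_zero.mpr (ha n).symm)
      (summable_norm_neg_mul_pow hq a)

lemma qPoch_ne_zero_of_norm_lt_one (ha : ‖a‖ < 1) (hq : ‖q‖ < 1) : qPoch a q ≠ 0 := by
  refine qPoch_ne_zero hq fun n ↦ ne_of_apply_ne norm ?_
  rw [norm_mul, norm_pow, norm_one]
  exact (mul_lt_one_of_nonneg_of_lt_one_left (norm_nonneg a) ha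
    (pow_le_one₀ (norm_nonneg q) hq.le)).ne

lemma qPoch_mul_qPoch_sq (hq : ‖q‖ < 1) (a : ℂ) :
    qPoch a (q ^ 2) * qPoch (a * q) (q ^ 2) = qPoch a q := by
  have hq2 : ‖q ^ 2‖ < 1 := norm_pow_lt_one hq two_ne_zero
  have even_factor (n : ℕ) : 1 - a * (q ^ 2) ^ n = 1 - a * q ^ (2 * n) := by ring
  have odd_factor (n : ℕ) : 1 - a * q * (q ^ 2) ^ n = 1 - a * q ^ (2 * n + 1) := by ring
  have h_even := multipliable_one_sub_mul_pow hq2 a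
  have h_odd := multipliable_one_sub_mul_pow hq2 (a * q)
  simp only [even_factor] at h_even
  simp only [odd_factor] at h_odd
  simpa only [qPoch, even_factor, odd_factor] using
    tprod_even_mul_odd (f := fun n ↦ 1 - a * q ^ n) h_even h_odd

end QPochhammer

lemma prod_one_sub_primitiveRoot_pow_mul {R : Type*} [CommRing R] [IsDomain R] {ω : R} {k : ℕ}
    (hω : IsPrimitiveRoot ω k) (hk : 0 < k) (x : R) :
    ∏ i ∈ range k, (1 - ω ^ i * x) = 1 - x ^ k := by
  simpa [Polynomial.eval_prod] using
    (congrArg (Polynomial.eval 1) (X_pow_sub_C_eq_prod hω hk rfl)).symm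

lemma prod_qPoch_primitiveRoot_pow_mul {q ω : ℂ} {k : ℕ} (hω : IsPrimitiveRoot ω k) (hk : 0 < k)
    (hq : ‖q‖ < 1) (a : ℂ) :
    ∏ i ∈ range k, qPoch (ω ^ i * a) q = qPoch (a ^ k) (q ^ k) := by
  simp only [qPoch]
  rw [← Multipliable.tprod_finsetProd fun i _ ↦ multipliable_one_sub_mul_pow hq (ω ^ i * a)]
  refine tprod_congr fun n ↦ ?_
  simp only [mul_assoc, prod_one_sub_primitiveRoot_pow_mul hω hk, mul_pow, pow_right_comm]

lemma qPoch_cube_roots_mul {q : ℂ} (hq : ‖q‖ < 1) (a : ℂ) :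
    qPoch a q * qPoch (ζ * a) q * qPoch (ζ⁻¹ * a) q = qPoch (a ^ 3) (q ^ 3) := by
  have hζ : IsPrimitiveRoot ζ 3 := Complex.isPrimitiveRoot_exp 3 three_ne_zero
  have hζ_inv : ζ⁻¹ = ζ ^ 2 := inv_eq_of_mul_eq_one_right (by rw [← pow_succ', hζ.pow_eq_one])
  rw [← prod_qPoch_primitiveRoot_pow_mul hζ three_pos hq]
  simp [prod_range_succ, hζ_inv]

lemma qPoch_neg_mul_qPoch_sq {q : ℂ} (hq : ‖q‖ < 1) : qPoch (-q) q * qPoch q (q ^ 2) = 1 := by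
  have h_neg : qPoch q q * qPoch (-q) q = qPoch (q ^ 2) (q ^ 2) := by
    simpa [prod_range_succ] using
      prod_qPoch_primitiveRoot_pow_mul (IsPrimitiveRoot.neg_one 0 (by simp)) two_pos hq q
  have h_split := qPoch_mul_qPoch_sq hq q
  rw [← pow_two] at h_split
  have hq2 := norm_pow_lt_one hq two_ne_zero
  apply mul_right_cancel₀ (qPoch_ne_zero_of_norm_lt_one hq2 hq2)
  linear_combination h_neg + qPoch (-q) q * h_split

section Shanks

variable {K : Type*} [Field K] {q : K}

/-- The finite product `Pₙ = ∏_{j<n} (1 - q^{2j+2}) / (1 - q^{2j+1})`, a truncation of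
`(q²; q²)_∞ / (q; q²)_∞`. -/
def shanksProd (q : K) (n : ℕ) : K := ∏ j ∈ range n, (1 - q ^ (2 * j + 2)) / (1 - q ^ (2 * j + 1))

/-- The summand `(Pₙ / Pₛ) q^{s(2n+1)}` of Shanks's finite form of Gauss's triangular-number
identity. -/
def shanksTerm (q : K) (n s : ℕ) : K := shanksProd q n / shanksProd q s * q ^ (s * (2 * n + 1))

/-- The Wilf–Zeilberger mate of `shanksTerm`: its difference in `s` is the difference of
`shanksTerm` in `n`. -/
def shanksMate (q : K) (n s : ℕ) : K :=
  shanksTerm q n s * ((1 - q ^ (2 * s)) / (1 - q ^ (2 * n + 1)))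

lemma shanksProd_succ (q : K) (n : ℕ) :
    shanksProd q (n + 1) = shanksProd q n * ((1 - q ^ (2 * n + 2)) / (1 - q ^ (2 * n + 1))) :=
  prod_range_succ _ n

lemma shanksProd_ne_zero (hq : ∀ k ≠ 0, q ^ k ≠ 1) (n : ℕ) : shanksProd q n ≠ 0 :=
  prod_ne_zero_iff.mpr fun _ _ ↦
    div_ne_zero (sub_ne_zero.mpr (hq _ (by lia)).symm) (sub_ne_zero.mpr (hq _ (by lia)).symm)

lemma shanksTerm_self (hq : ∀ k ≠ 0, q ^ k ≠ 1) (n : ℕ) :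
    shanksTerm q n n = q ^ (n * (2 * n + 1)) := by
  rw [shanksTerm, div_self (shanksProd_ne_zero hq n), one_mul]

lemma shanksTerm_succ_sub (hq : ∀ k ≠ 0, q ^ k ≠ 1) (n s : ℕ) :
    shanksTerm q (n + 1) s - shanksTerm q n s = shanksMate q n (s + 1) - shanksMate q n s := by
  have h_odd : 1 - q ^ (2 * n + 1) ≠ 0 := sub_ne_zero.mpr (hq _ (by lia)).symm
  have h_even : 1 - q ^ (2 * s + 2) ≠ 0 := sub_ne_zero.mpr (hq _ (by lia)).symm
  have h_prod := shanksProd_ne_zero hq s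
  simp only [shanksMate, shanksTerm, shanksProd_succ, mul_add_one]
  field_simp
  ring

lemma shanksMate_succ_self (hq : ∀ k ≠ 0, q ^ k ≠ 1) (n : ℕ) :
    shanksMate q n (n + 1) = q ^ ((n + 1) * (2 * n + 1)) := by
  have h_odd : 1 - q ^ (2 * n + 1) ≠ 0 := sub_ne_zero.mpr (hq _ (by lia)).symm
  have h_even : 1 - q ^ (2 * n + 2) ≠ 0 := sub_ne_zero.mpr (hq _ (by lia)).symm
  have h_prod := shanksProd_ne_zero hq n
  simp only [shanksMate, shanksTerm, shanksProd_succ, mul_add_one]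
  field_simp

lemma sum_shanksTerm_succ (hq : ∀ k ≠ 0, q ^ k ≠ 1) (n : ℕ) :
    ∑ s ∈ range (n + 1), shanksTerm q (n + 1) s =
      ∑ s ∈ range (n + 1), shanksTerm q n s + q ^ ((n + 1) * (2 * n + 1)) := by
  rw [← sub_eq_iff_eq_add', ← sum_sub_distrib]
  simp only [shanksTerm_succ_sub hq, sum_range_sub, shanksMate_succ_self hq]
  simp [shanksMate]

lemma sum_pow_triangular_eq_sum_shanksTerm (hq : ∀ k ≠ 0, q ^ k ≠ 1) (n : ℕ) :
    ∑ s ∈ range (2 * n + 1), q ^ (s * (s + 1) / 2) = ∑ s ∈ range (n + 1), shanksTerm q n s := by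
  induction n with
  | zero => simp [shanksTerm_self hq]
  | succ n ih =>
    have h_odd : (2 * n + 1) * (2 * n + 1 + 1) / 2 = (n + 1) * (2 * n + 1) :=
      Nat.div_eq_of_eq_mul_left two_pos (by ring)
    have h_even : (2 * n + 2) * (2 * n + 2 + 1) / 2 = (n + 1) * (2 * (n + 1) + 1) :=
      Nat.div_eq_of_eq_mul_left two_pos (by ring)
    rw [sum_range_succ _ (n + 1), sum_shanksTerm_succ hq, shanksTerm_self hq, ← ih, ← h_odd,
      ← h_even, ← sum_range_succ, ← sum_range_succ, mul_add_one]

end Shanks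

section Gauss

lemma tendsto_sum_mul_pow_of_isBounded {𝕜 : Type*} [NormedDivisionRing 𝕜] {q : 𝕜} (hq : ‖q‖ < 1)
    {c : ℕ → 𝕜} (hc : Bornology.IsBounded (Set.range c)) :
    Tendsto (fun n : ℕ ↦ ∑ s ∈ range (n + 1), c s * q ^ (s * (2 * n + 1))) atTop (𝓝 (c 0)) := by
  obtain ⟨C, hC⟩ := hc.exists_norm_le
  have hC (s : ℕ) : ‖c s‖ ≤ C := hC _ ⟨s, rfl⟩
  have h_bound : Tendsto (fun n : ℕ ↦ C * (n * ‖q‖ ^ n)) atTop (𝓝 0) := by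
    simpa only [mul_zero] using
      (tendsto_self_mul_const_pow_of_lt_one (norm_nonneg q) hq).const_mul C
  have h_term (n s : ℕ) : ‖c (s + 1) * q ^ ((s + 1) * (2 * n + 1))‖ ≤ C * ‖q‖ ^ n := by
    rw [norm_mul, norm_pow]
    have h_exp : n ≤ (s + 1) * (2 * n + 1) := by nlinarith
    exact mul_le_mul (hC _) (pow_le_pow_of_le_one (norm_nonneg q) hq.le h_exp) (by positivity)
      ((norm_nonneg _).trans (hC 0))
  have h_tail : Tendsto (fun n : ℕ ↦ ∑ s ∈ range n, c (s + 1) * q ^ ((s + 1) * (2 * n + 1)))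
      atTop (𝓝 0) := by
    refine squeeze_zero_norm (fun n ↦ ?_) h_bound
    calc _ ≤ ∑ _s ∈ range n, C * ‖q‖ ^ n := norm_sum_le_of_le _ fun s _ ↦ h_term n s
      _ = C * (n * ‖q‖ ^ n) := by rw [sum_const, card_range, nsmul_eq_mul]; ring
  simpa [sum_range_succ'] using h_tail.add_const (c 0)

lemma summable_pow_triangular {𝕜 : Type*} [NormedDivisionRing 𝕜] [CompleteSpace 𝕜] {q : 𝕜}
    (hq : ‖q‖ < 1) : Summable fun n : ℕ ↦ q ^ (n * (n + 1) / 2) := by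
  refine .of_norm_bounded (summable_geometric_of_lt_one (norm_nonneg q) hq) fun n ↦ ?_
  rw [norm_pow]
  refine pow_le_pow_of_le_one (norm_nonneg q) hq.le ?_
  rw [Nat.le_div_iff_mul_le two_pos]
  cases n <;> nlinarith

variable {q : ℂ}

lemma tendsto_shanksProd (hq : ‖q‖ < 1) :
    Tendsto (shanksProd q) atTop (𝓝 (qPoch (q ^ 2) (q ^ 2) / qPoch q (q ^ 2))) := by
  have hq2 : ‖q ^ 2‖ < 1 := norm_pow_lt_one hq two_ne_zero
  have h_ne : qPoch q (q ^ 2) ≠ 0 := qPoch_ne_zero_of_norm_lt_one hq hq2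
  refine ((multipliable_one_sub_mul_pow hq2 (q ^ 2)).hasProd.tendsto_prod_nat.div
    (multipliable_one_sub_mul_pow hq2 q).hasProd.tendsto_prod_nat h_ne).congr fun n ↦ ?_
  rw [Pi.div_apply, shanksProd, ← prod_div_distrib]
  exact prod_congr rfl fun j _ ↦ by ring

theorem hasSum_pow_triangular (hq : ‖q‖ < 1) :
    HasSum (fun n : ℕ ↦ q ^ (n * (n + 1) / 2)) (qPoch (q ^ 2) (q ^ 2) / qPoch q (q ^ 2)) := by
  have h_prod := tendsto_shanksProd hq
  have hq2 := norm_pow_lt_one hq two_ne_zero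
  have h_ne : qPoch (q ^ 2) (q ^ 2) / qPoch q (q ^ 2) ≠ 0 :=
    div_ne_zero (qPoch_ne_zero_of_norm_lt_one hq2 hq2) (qPoch_ne_zero_of_norm_lt_one hq hq2)
  have h_shanks : Tendsto (fun n ↦ ∑ s ∈ range (n + 1), shanksTerm q n s) atTop
      (𝓝 (qPoch (q ^ 2) (q ^ 2) / qPoch q (q ^ 2))) := by
    simpa [shanksProd, shanksTerm, div_eq_mul_inv, mul_sum, mul_assoc] using
      h_prod.mul (tendsto_sum_mul_pow_of_isBounded hq
        (Metric.isBounded_range_of_tendsto _ (h_prod.inv₀ h_ne)))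
  have h_sum := summable_pow_triangular hq
  have h_double : Tendsto (fun n : ℕ ↦ 2 * n + 1) atTop atTop :=
    tendsto_atTop_mono (fun n ↦ show n ≤ 2 * n + 1 by lia) tendsto_id
  have h_partial := h_sum.hasSum.tendsto_sum_nat.comp h_double
  refine h_sum.hasSum_iff.mpr (tendsto_nhds_unique h_partial (h_shanks.congr fun n ↦ ?_))
  exact (sum_pow_triangular_eq_sum_shanksTerm (fun _ ↦ pow_ne_one_of_norm_lt_one hq) n).symm

end Gauss

theorem rank_generating_function_at_cube_root (q : ℂ) (hq : ‖q‖ < 1) :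
    1 / (qPoch (ζ * q ^ 2) (q ^ 2) * qPoch q (q ^ 2) * qPoch (ζ⁻¹ * q ^ 2) (q ^ 2) *
        qPoch (q ^ 3) (q ^ 6)) =
      qPoch (-(q ^ 3)) (q ^ 3) / qPoch (q ^ 6) (q ^ 6) *
        ∑' n : ℕ, q ^ (n * (n + 1) / 2) := by
  have hq2 := norm_pow_lt_one hq two_ne_zero
  have h_cube := qPoch_cube_roots_mul hq2 (q ^ 2)
  have h_euler := qPoch_neg_mul_qPoch_sq (norm_pow_lt_one hq three_ne_zero)
  simp only [← pow_mul, Nat.reduceMul] at h_cube h_euler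
  have h_ne : qPoch (q ^ 2) (q ^ 2) ≠ 0 := qPoch_ne_zero_of_norm_lt_one hq2 hq2
  rw [(hasSum_pow_triangular hq).tsum_eq, ← h_cube, eq_one_div_of_mul_eq_one_left h_euler]
  field_simp
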